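/- Let F be a field of characteristic zero containing a primitive n-th root of unity for every n ≥ 1 (e.g. F = ℂ). Let V ⊆ F(z) be the F-subalgebra generated by z, z⁻¹, and the elements (1−zⁿ)⁻¹ for all n ≥ 1. Suppose ρ : V → F is an F-linear map such that ρ(z^j) = 0 for every integer j, and such that for all n ≥ 1, k ≥ 0 and 0 ≤ a < n one has ρ( z^{nk+a} / (1−zⁿ)^{k+1} ) = 1 if k = 0 and a = 0, and 0 otherwise. Then ρ(f) = ρ_K(f) for every f ∈ V; in other words, ρ_K is the unique residue map for the K-theory of Deligne–Mumford stacks. -/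

import Mathlib

open scoped LaurentSeries

/-- The constant coefficient (coefficient of `z⁰`) of the formal Laurent-series expansion
at `z = 0` of a rational function. -/
noncomputable def laurentCoeffZero {F : Type*} [Field F] (f : RatFunc F) : F :=
  ((f : LaurentSeries F)).coeff 0

/-- The K-theoretic residue map `ρ_K(f) := (coeff of z⁰ of the expansion of f at 0) −
(coeff of z⁰ of the expansion at 0 of f(z⁻¹))`, where `f ↦ f(z⁻¹)` is the `F`-algebra
automorphism `ι` of `F(z)` with `ι(z) = z⁻¹`. -/
noncomputable def rhoK {F : Type*} [Field F] (ι : RatFunc F ≃ₐ[F] RatFunc F)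
    (f : RatFunc F) : F :=
  laurentCoeffZero f - laurentCoeffZero (ι f)

/-!
A geometric sum rewrites `(1 - zⁿ)⁻¹` with denominator `1 - zᵐ` whenever `n ∣ m`, so every element
of `V` is a linear combination of fractions `z^j / (1 - zⁿ)^k` with one common `n`. The identity
`z^j / (1 - zⁿ)^(k+1) = z^j / (1 - zⁿ)^k + z^(j+n) / (1 - zⁿ)^(k+1)` then shows, by induction on
`k`, that modulo terms with smaller `k` such a fraction depends only on `j` mod `n`; choosing the
representative of `j` in `[nk, nk + n)` reaches the fractions on which the residue is prescribed.
Hence these fractions and the powers of `z` span `V`, a linear functional on `V` is determined by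
its values there, and it remains to compute the values of `ρ_K`.
-/

section CyclotomicLaurent

variable {R K : Type*} [CommRing R] [Field K] [Algebra R K] {x : K}

variable (R) in
/-- The algebra `R[x, x⁻¹, (1 - xⁿ)⁻¹ : n ≥ 1]` inside a field `K` over `R`; for `x = z` in
`K = F(z)` and `R = F` it is the domain of the K-theoretic residue maps. -/
def cyclotomicLaurent (x : K) : Subalgebra R K :=
  Algebra.adjoin R ({x, x⁻¹} ∪ {g : K | ∃ n : ℕ, 1 ≤ n ∧ g = (1 - x ^ n)⁻¹})

variable (R) in
/-- The algebra `R[x, x⁻¹, (1 - xⁿ)⁻¹]` for a single exponent `n`. As `n` grows along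
divisibility, these exhaust `cyclotomicLaurent R x`. -/
def cyclotomicLaurentLevel (x : K) (n : ℕ) : Subalgebra R K :=
  Algebra.adjoin R {x, x⁻¹, (1 - x ^ n)⁻¹}

/-- The fractions `x^(nk+a) / (1 - xⁿ)^(k+1)` with `0 ≤ a < n`, on which the values of a residue
map are prescribed. The condition `a < n` forces `n ≥ 1`. -/
def basicFractions (x : K) : Set K :=
  {g | ∃ n k a : ℕ, a < n ∧ g = x ^ (n * k + a) / (1 - x ^ n) ^ (k + 1)}

theorem self_mem_cyclotomicLaurent (x : K) : x ∈ cyclotomicLaurent R x :=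
  Algebra.subset_adjoin (by simp)

theorem zpow_mem_cyclotomicLaurent (x : K) (j : ℤ) : x ^ j ∈ cyclotomicLaurent R x := by
  have h_inv : x⁻¹ ∈ cyclotomicLaurent R x := Algebra.subset_adjoin (by simp)
  cases j with
  | ofNat m => simpa using pow_mem (self_mem_cyclotomicLaurent x) m
  | negSucc m => simpa [zpow_negSucc, ← inv_pow] using pow_mem h_inv (m + 1)

theorem basicFractions_subset_cyclotomicLaurent (x : K) :
    basicFractions x ⊆ cyclotomicLaurent R x := by
  rintro _ ⟨n, k, a, ha, rfl⟩
  have h_inv : (1 - x ^ n)⁻¹ ∈ cyclotomicLaurent R x :=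
    Algebra.subset_adjoin (Or.inr ⟨n, by lia, rfl⟩)
  rw [div_eq_mul_inv, ← inv_pow]
  exact mul_mem (pow_mem (self_mem_cyclotomicLaurent x) _) (pow_mem h_inv _)

theorem cyclotomicLaurentLevel_mono {n m : ℕ} (hm : x ^ m ≠ 1) (h : n ∣ m) :
    cyclotomicLaurentLevel R x n ≤ cyclotomicLaurentLevel R x m := by
  obtain ⟨c, rfl⟩ := h
  have h_geom : (1 - x ^ n) * ∑ i ∈ Finset.range c, (x ^ n) ^ i = 1 - x ^ (n * c) := by
    rw [mul_neg_geom_sum, pow_mul]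
  have h_prod_ne : (1 - x ^ n) * ∑ i ∈ Finset.range c, (x ^ n) ^ i ≠ 0 :=
    h_geom ▸ sub_ne_zero.2 hm.symm
  have h_inv : (1 - x ^ n)⁻¹ = (∑ i ∈ Finset.range c, (x ^ n) ^ i) * (1 - x ^ (n * c))⁻¹ := by
    rw [← h_geom, mul_inv_rev, mul_inv_cancel_left₀ (right_ne_zero_of_mul h_prod_ne)]
  have hx : x ∈ cyclotomicLaurentLevel R x (n * c) := Algebra.subset_adjoin (by simp)
  refine Algebra.adjoin_le ?_
  rintro _ (rfl | rfl | rfl)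
  · exact hx
  · exact Algebra.subset_adjoin (by simp)
  · rw [h_inv]
    exact mul_mem (sum_mem fun i _ => pow_mem (pow_mem hx n) i) (Algebra.subset_adjoin (by simp))

theorem exists_mem_cyclotomicLaurentLevel (hx : ¬IsOfFinOrder x) {f : K}
    (hf : f ∈ cyclotomicLaurent R x) : ∃ n, 0 < n ∧ f ∈ cyclotomicLaurentLevel R x n := by
  have h_ne : ∀ n, 0 < n → x ^ n ≠ 1 := orderOf_eq_zero_iff'.1 (orderOf_eq_zero hx)
  have h_common {f g : K} (hf : ∃ n, 0 < n ∧ f ∈ cyclotomicLaurentLevel R x n)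
      (hg : ∃ n, 0 < n ∧ g ∈ cyclotomicLaurentLevel R x n) :
      ∃ n, 0 < n ∧ f ∈ cyclotomicLaurentLevel R x n ∧ g ∈ cyclotomicLaurentLevel R x n := by
    obtain ⟨n, hn, hf⟩ := hf
    obtain ⟨m, hm, hg⟩ := hg
    have hnm := h_ne (n * m) (Nat.mul_pos hn hm)
    exact ⟨n * m, Nat.mul_pos hn hm, cyclotomicLaurentLevel_mono hnm (dvd_mul_right n m) hf,
      cyclotomicLaurentLevel_mono hnm (dvd_mul_left m n) hg⟩
  induction hf using Algebra.adjoin_induction with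
  | mem g hg =>
    rcases hg with (rfl | rfl) | ⟨n, hn, rfl⟩
    · exact ⟨1, one_pos, Algebra.subset_adjoin (by simp)⟩
    · exact ⟨1, one_pos, Algebra.subset_adjoin (by simp)⟩
    · exact ⟨n, hn, Algebra.subset_adjoin (by simp)⟩
  | algebraMap r => exact ⟨1, one_pos, Subalgebra.algebraMap_mem _ r⟩
  | add g h _ _ hg hh =>
    obtain ⟨n, hn, hg, hh⟩ := h_common hg hh
    exact ⟨n, hn, add_mem hg hh⟩
  | mul g h _ _ hg hh =>
    obtain ⟨n, hn, hg, hh⟩ := h_common hg hh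
    exact ⟨n, hn, mul_mem hg hh⟩

theorem exists_zpow_div_pow_of_mem_closure {y g : K} (hx : x ≠ 0)
    (hg : g ∈ Submonoid.closure {x, x⁻¹, y⁻¹}) : ∃ (j : ℤ) (k : ℕ), g = x ^ j / y ^ k := by
  induction hg using Submonoid.closure_induction with
  | mem g hg =>
    rcases hg with rfl | rfl | rfl
    · exact ⟨1, 0, by simp⟩
    · exact ⟨-1, 0, by simp⟩
    · exact ⟨0, 1, by simp⟩
  | one => exact ⟨0, 0, by simp⟩
  | mul g h _ _ hg hh =>
    obtain ⟨i, k, rfl⟩ := hg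
    obtain ⟨j, l, rfl⟩ := hh
    exact ⟨i + j, k + l, by rw [div_mul_div_comm, zpow_add₀ hx, pow_add]⟩

theorem zpow_div_one_sub_pow_succ_eq_add {n : ℕ} (hx : x ≠ 0) (hn : x ^ n ≠ 1) (k : ℕ) (j : ℤ) :
    x ^ j / (1 - x ^ n) ^ (k + 1) =
      x ^ j / (1 - x ^ n) ^ k + x ^ (j + n) / (1 - x ^ n) ^ (k + 1) := by
  have h_ne : 1 - x ^ n ≠ 0 := sub_ne_zero.2 hn.symm
  rw [zpow_add₀ hx, zpow_natCast]
  field_simp [h_ne]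
  ring

theorem zpow_div_one_sub_pow_mem {W : Submodule R K} {n : ℕ} (hx : x ≠ 0) (hn : 0 < n)
    (hxn : x ^ n ≠ 1) (hW_zpow : ∀ j : ℤ, x ^ j ∈ W) (hW_basic : basicFractions x ⊆ W)
    (k : ℕ) (j : ℤ) : x ^ j / (1 - x ^ n) ^ k ∈ W := by
  induction k generalizing j with
  | zero => simpa using hW_zpow j
  | succ k ih =>
    have h_periodic : Function.Periodic (fun j : ℤ => x ^ j / (1 - x ^ n) ^ (k + 1) ∈ W) n := by
      intro j
      beta_reduce
      rw [zpow_div_one_sub_pow_succ_eq_add hx hxn k j, W.add_mem_iff_right (ih j)]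
    obtain ⟨i, ⟨h_le, h_lt⟩, h_iff⟩ :=
      h_periodic.exists_mem_Ico (Int.natCast_pos.2 hn) j ((n * k : ℕ) : ℤ)
    obtain ⟨a, rfl⟩ := Int.le.dest h_le
    refine h_iff.mpr (hW_basic ⟨n, k, a, by lia, ?_⟩)
    rw [← Nat.cast_add, zpow_natCast]

theorem toSubmodule_cyclotomicLaurent (hx₀ : x ≠ 0) (hx : ¬IsOfFinOrder x) :
    Subalgebra.toSubmodule (cyclotomicLaurent R x) =
      Submodule.span R (Set.range (fun j : ℤ => x ^ j) ∪ basicFractions x) := by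
  refine le_antisymm (fun f hf => ?_) (Submodule.span_le.2 (Set.union_subset ?_
    (basicFractions_subset_cyclotomicLaurent x)))
  · obtain ⟨n, hn, hf⟩ := exists_mem_cyclotomicLaurentLevel hx hf
    rw [← Subalgebra.mem_toSubmodule, cyclotomicLaurentLevel, Algebra.adjoin_eq_span] at hf
    refine Submodule.span_le.2 (fun g hg => ?_) hf
    obtain ⟨j, k, rfl⟩ := exists_zpow_div_pow_of_mem_closure hx₀ hg
    exact zpow_div_one_sub_pow_mem hx₀ hn (orderOf_eq_zero_iff'.1 (orderOf_eq_zero hx) n hn)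
      (fun i => Submodule.subset_span (Or.inl ⟨i, rfl⟩))
      (fun _ h => Submodule.subset_span (Or.inr h)) k j
  · rintro _ ⟨j, rfl⟩
    exact zpow_mem_cyclotomicLaurent x j

theorem cyclotomicLaurent_hom_ext {M : Type*} [AddCommMonoid M] [Module R M] (hx₀ : x ≠ 0)
    (hx : ¬IsOfFinOrder x) {φ ψ : cyclotomicLaurent R x →ₗ[R] M}
    (h_zpow : ∀ (j : ℤ) (h : x ^ j ∈ cyclotomicLaurent R x), φ ⟨x ^ j, h⟩ = ψ ⟨x ^ j, h⟩)
    (h_basic : ∀ g ∈ basicFractions x, ∀ h : g ∈ cyclotomicLaurent R x, φ ⟨g, h⟩ = ψ ⟨g, h⟩) :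
    φ = ψ := by
  have h_le : Subalgebra.toSubmodule (cyclotomicLaurent R x) ≤
      (LinearMap.eqLocus φ ψ).map (cyclotomicLaurent R x).val.toLinearMap := by
    rw [toSubmodule_cyclotomicLaurent hx₀ hx, Submodule.span_le]
    rintro g (⟨j, rfl⟩ | hg)
    · exact ⟨⟨_, zpow_mem_cyclotomicLaurent x j⟩, h_zpow j _, rfl⟩
    · exact ⟨⟨g, basicFractions_subset_cyclotomicLaurent x hg⟩, h_basic g hg _, rfl⟩
  ext ⟨f, hf⟩
  obtain ⟨g, h_eq, rfl⟩ := h_le hf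
  exact h_eq

end CyclotomicLaurent

theorem not_isOfFinOrder_of_transcendental {R A : Type*} [CommRing R] [Nontrivial R] [Ring A]
    [Algebra R A] {x : A} (hx : Transcendental R x) : ¬IsOfFinOrder x := by
  intro h
  obtain ⟨n, hn, hxn⟩ := isOfFinOrder_iff_pow_eq_one.1 h
  exact hx.pow hn (hxn ▸ isAlgebraic_one)

theorem inv_pow_div_one_sub_inv_pow {K : Type*} [Field K] {x : K} (hx : x ≠ 0) (n k : ℕ) {j : ℕ}
    (hj : j ≤ n * k) :
    x⁻¹ ^ j / (1 - x⁻¹ ^ n) ^ k = (-1) ^ k * (x ^ (n * k - j) / (1 - x ^ n) ^ k) := by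
  have h_one_sub : 1 - x⁻¹ ^ n = -1 * (1 - x ^ n) / x ^ n := by
    rw [inv_pow]
    field_simp
    ring
  have h_sign : ((-1 : K) ^ k)⁻¹ = (-1) ^ k := by rw [← inv_pow, inv_neg_one]
  rw [h_one_sub, div_pow, mul_pow, ← pow_mul, pow_sub₀ x hx hj, inv_pow x]
  simp only [div_eq_mul_inv, mul_inv_rev, inv_inv, h_sign]
  ring

section ResidueMap

open Polynomial
open scoped RatFunc

variable {F : Type*} [Field F]

theorem laurentCoeffZero_add (f g : RatFunc F) :
    laurentCoeffZero (f + g) = laurentCoeffZero f + laurentCoeffZero g := by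
  simp [laurentCoeffZero]

theorem laurentCoeffZero_smul (c : F) (f : RatFunc F) :
    laurentCoeffZero (c • f) = c * laurentCoeffZero f := by
  have h_algebraMap : algebraMap (RatFunc F) (LaurentSeries F) (RatFunc.C c) = HahnSeries.C c := by
    rw [← RatFunc.algebraMap_C, ← IsScalarTower.algebraMap_apply]
    simp
  rw [laurentCoeffZero, RatFunc.smul_eq_C_mul, map_mul, h_algebraMap, HahnSeries.C_mul_eq_smul,
    HahnSeries.coeff_smul, smul_eq_mul, laurentCoeffZero]

theorem laurentCoeffZero_zpow (j : ℤ) :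
    laurentCoeffZero (RatFunc.X ^ j : RatFunc F) = if j = 0 then 1 else 0 := by
  rw [laurentCoeffZero, map_zpow₀, RatFunc.coe_X, ← RatFunc.single_zpow, HahnSeries.coeff_single]
  simp only [eq_comm]

theorem laurentCoeffZero_div (p q : F[X]) (hq : q.coeff 0 ≠ 0) :
    laurentCoeffZero (algebraMap F[X] (RatFunc F) p / algebraMap F[X] (RatFunc F) q) =
      p.coeff 0 / q.coeff 0 := by
  have hq' : PowerSeries.constantCoeff (q : PowerSeries F) ≠ 0 := by simpa using hq
  have h_expansion : algebraMap (RatFunc F) (LaurentSeries F)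
      (algebraMap F[X] (RatFunc F) p / algebraMap F[X] (RatFunc F) q) =
      ((p * (q : PowerSeries F)⁻¹ : PowerSeries F) : LaurentSeries F) := by
    have h_coe (r : F[X]) : algebraMap (RatFunc F) (LaurentSeries F) (algebraMap F[X] _ r) =
        ((r : PowerSeries F) : LaurentSeries F) := (RatFunc.coe_coe r).symm
    have hq_ne : ((q : PowerSeries F) : LaurentSeries F) ≠ 0 :=
      (map_ne_zero_iff _ HahnSeries.ofPowerSeries_injective).2 fun h => hq' (by simp [h])
    rw [map_div₀, h_coe, h_coe, div_eq_iff hq_ne, ← map_mul, mul_assoc,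
      PowerSeries.inv_mul_cancel _ hq', mul_one]
  rw [laurentCoeffZero, h_expansion]
  exact (LaurentSeries.coeff_coe_powerSeries _ 0).trans (by simp [div_eq_mul_inv])

theorem laurentCoeffZero_X_pow_div {n : ℕ} (hn : n ≠ 0) (j k : ℕ) :
    laurentCoeffZero (RatFunc.X ^ j / (1 - RatFunc.X ^ n) ^ k : RatFunc F) =
      if j = 0 then 1 else 0 := by
  have h := laurentCoeffZero_div (X ^ j) ((1 - X ^ n) ^ k : F[X])
    (by simp [coeff_zero_eq_eval_zero, hn])
  simp only [map_pow, map_sub, map_one, RatFunc.algebraMap_X] at h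
  rw [h]
  simp [coeff_zero_eq_eval_zero, hn, zero_pow_eq]

/-- The K-theoretic residue `rhoK` bundled as a linear functional on `F(z)`. -/
noncomputable def rhoKLinear (ι : RatFunc F ≃ₐ[F] RatFunc F) : RatFunc F →ₗ[F] F where
  toFun := rhoK ι
  map_add' f g := by
    simp only [rhoK, map_add, laurentCoeffZero_add]
    ring
  map_smul' c f := by
    simp only [rhoK, map_smul, laurentCoeffZero_smul, RingHom.id_apply, smul_eq_mul]
    ring

theorem rhoK_zpow (ι : RatFunc F ≃ₐ[F] RatFunc F) (hι : ι RatFunc.X = RatFunc.X⁻¹)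
    (j : ℤ) : rhoK ι (RatFunc.X ^ j) = 0 := by
  rw [rhoK, map_zpow₀, hι, inv_zpow', laurentCoeffZero_zpow, laurentCoeffZero_zpow]
  simp only [neg_eq_zero, sub_self]

theorem rhoK_basicFraction (ι : RatFunc F ≃ₐ[F] RatFunc F) (hι : ι RatFunc.X = RatFunc.X⁻¹)
    {n a : ℕ} (ha : a < n) (k : ℕ) :
    rhoK ι (RatFunc.X ^ (n * k + a) / (1 - RatFunc.X ^ n) ^ (k + 1)) =
      if k = 0 ∧ a = 0 then 1 else 0 := by
  have hn : n ≠ 0 := by lia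
  have h_lt : n * k + a < n * (k + 1) := by rw [mul_add_one]; lia
  have h_map : ι (RatFunc.X ^ (n * k + a) / (1 - RatFunc.X ^ n) ^ (k + 1)) =
      (-1 : F) ^ (k + 1) •
        (RatFunc.X ^ (n * (k + 1) - (n * k + a)) / (1 - RatFunc.X ^ n) ^ (k + 1)) := by
    simp only [map_div₀, map_pow, map_sub, map_one, hι, Algebra.smul_def, map_neg]
    exact inv_pow_div_one_sub_inv_pow RatFunc.X_ne_zero n (k + 1) h_lt.le
  rw [rhoK, h_map, laurentCoeffZero_smul,
    laurentCoeffZero_X_pow_div hn, laurentCoeffZero_X_pow_div hn,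
    if_neg (Nat.sub_ne_zero_of_lt h_lt), mul_zero, sub_zero]
  simp only [Nat.add_eq_zero_iff, mul_eq_zero, hn, false_or]

end ResidueMap

theorem stmt_12_general {F : Type*} [Field F]
    (ι : RatFunc F ≃ₐ[F] RatFunc F) (hι : ι RatFunc.X = RatFunc.X⁻¹)
    (ρ : cyclotomicLaurent F (RatFunc.X : RatFunc F) →ₗ[F] F)
    (hρ₁ : ∀ (j : ℤ) (h : RatFunc.X ^ j ∈ cyclotomicLaurent F (RatFunc.X : RatFunc F)),
      ρ ⟨RatFunc.X ^ j, h⟩ = 0)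
    (hρ₂ : ∀ n : ℕ, 1 ≤ n → ∀ k a : ℕ, a < n →
      ∀ h : RatFunc.X ^ (n * k + a) / (1 - RatFunc.X ^ n) ^ (k + 1) ∈
        cyclotomicLaurent F (RatFunc.X : RatFunc F),
      ρ ⟨RatFunc.X ^ (n * k + a) / (1 - RatFunc.X ^ n) ^ (k + 1), h⟩
        = if k = 0 ∧ a = 0 then 1 else 0)
    (f : RatFunc F) (hf : f ∈ cyclotomicLaurent F (RatFunc.X : RatFunc F)) :
    ρ ⟨f, hf⟩ = rhoK ι f := by
  have h_eq : ρ = (rhoKLinear ι).comp (cyclotomicLaurent F RatFunc.X).val.toLinearMap := by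
    refine cyclotomicLaurent_hom_ext RatFunc.X_ne_zero
      (not_isOfFinOrder_of_transcendental RatFunc.transcendental_X) (fun j h => ?_) ?_
    · exact (hρ₁ j h).trans (rhoK_zpow ι hι j).symm
    · rintro _ ⟨n, k, a, ha, rfl⟩ h
      exact (hρ₂ n (by lia) k a ha h).trans (rhoK_basicFraction ι hι ha k).symm
  exact LinearMap.congr_fun h_eq ⟨f, hf⟩

set_option synthInstance.maxHeartbeats 1000000 in
set_option maxHeartbeats 1000000 in
/-- Over a characteristic-zero field containing primitive `n`-th roots of
unity for all `n ≥ 1`, any `F`-linear functional `ρ` on the subalgebra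
`V = F⟨z, z⁻¹, (1-zⁿ)⁻¹ (n ≥ 1)⟩ ⊆ F(z)` which vanishes on all powers `z^j` and satisfies
the normalization `ρ(z^{nk+a}/(1-zⁿ)^{k+1}) = δ_{k,0}δ_{a,0}` agrees with `ρ_K` on `V`;
i.e. `ρ_K` is the unique residue map for the K-theory of Deligne–Mumford stacks. -/
theorem stmt_12 {F : Type*} [Field F] [CharZero F]
    (hroots : ∀ n : ℕ, 1 ≤ n → ∃ γ : F, IsPrimitiveRoot γ n)
    (ι : RatFunc F ≃ₐ[F] RatFunc F) (hι : ι RatFunc.X = RatFunc.X⁻¹)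
    (V : Subalgebra F (RatFunc F))
    (hV : V = Algebra.adjoin F ({RatFunc.X, RatFunc.X⁻¹} ∪
      {g : RatFunc F | ∃ n : ℕ, 1 ≤ n ∧ g = (1 - RatFunc.X ^ n)⁻¹}))
    (ρ : V →ₗ[F] F)
    (hρ₁ : ∀ (j : ℤ) (h : (RatFunc.X ^ j : RatFunc F) ∈ V), ρ ⟨RatFunc.X ^ j, h⟩ = 0)
    (hρ₂ : ∀ n : ℕ, 1 ≤ n → ∀ k a : ℕ, a < n →
      ∀ h : (RatFunc.X ^ (n * k + a) / (1 - RatFunc.X ^ n) ^ (k + 1) : RatFunc F) ∈ V,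
      ρ ⟨RatFunc.X ^ (n * k + a) / (1 - RatFunc.X ^ n) ^ (k + 1), h⟩
        = if k = 0 ∧ a = 0 then 1 else 0)
    (f : RatFunc F) (hf : f ∈ V) :
    ρ ⟨f, hf⟩ = rhoK ι f := by
  subst hV
  exact stmt_12_general ι hι ρ hρ₁ hρ₂ f hf
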